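/- Let K and L be number fields, let k ≥ 2 and l ≥ 1 be integers, and let A : 𝓞_K → 𝓞_L be a ℤ-linear map with A(V_{K,k}) ⊆ V_{L,l}. Then there exist a field embedding τ : K → L and an element ε ∈ 𝓞_L such that A(x) = ε·τ(x) for all x ∈ 𝓞_K. -/

import Mathlib

open NumberField

/-- The set of `k`-free integers of a number field `K`: elements of the ring of
integers not lying in `𝔭^k` for any nonzero prime ideal `𝔭`. -/
def kfreeSet (K : Type*) [Field K] [NumberField K] (k : ℕ) : Set (𝓞 K) :=
  {x | ∀ P : Ideal (𝓞 K), P.IsPrime → P ≠ ⊥ → x ∉ P ^ k}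

/-! Off a given nonzero `D`, there is a prime `q` of `L`, over a large rational prime `p`, that is
unramified of residue degree one. Let `θ` be a nonzero integral generator of `L / ℚ`, multiply `D`
by an element of the conductor of `ℤ[θ]` and of the different, and write `θ * D * e = c` with
`c : ℕ`. Modulo any prime containing `1 - t * D * e` one has `θ ≡ t * c`, and this element is not a
unit for large `t : ℕ`. Hence `ℤ → 𝓞 L / q ^ l` is surjective.

The group `Λ = A⁻¹(q ^ l)` contains no `k`-free element but contains `p ^ M 𝓞 K` for large `M`. A
sieve shows that a class `x + N 𝓞 K` without local obstruction at the primes dividing `N` contains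
a `k`-free element, so `Λ` is covered by the groups `P ^ k` with `P ∣ p`. There are fewer than `p`
of these, and they meet `Λ` in subgroups whose index is a power of `p`; by B. H. Neumann's covering
lemma one of them contains `Λ`.

For `w : 𝓞 K` choose an integer `n` with `A w ≡ n * A 1` modulo `q ^ l`. Then `w - n` lies in
`Λ ⊆ P`, so `w` modulo `P` and `A w / A 1` modulo `q` are the same residue class of integers modulo
`p`. Consequently `A (x * y) * A 1 ≡ A x * A y` modulo `q`. If the two sides differed, `q` could
have been chosen to avoid their difference; so `A / A 1` is multiplicative. -/

open Finset in
theorem card_le_of_separated {ι : Type*} [Fintype ι] [DecidableEq ι] {T m : ℕ} (hm : 0 < m)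
    {S : Finset (ι → ℕ)} (hS : S ⊆ Fintype.piFinset fun _ => range T)
    (hsep : ∀ t ∈ S, ∀ t' ∈ S, (∀ i, |(t i : ℤ) - t' i| < m) → t = t') :
    #S ≤ (T / m + 1) ^ Fintype.card ι := by
  have hmaps : Set.MapsTo (fun (t : ι → ℕ) i => t i / m) S
      (Fintype.piFinset fun _ : ι => range (T / m + 1)) := fun t ht => by
    refine Fintype.mem_piFinset.mpr fun i => mem_range.mpr (Nat.lt_succ_of_le ?_)
    exact Nat.div_le_div_right (mem_range.mp (Fintype.mem_piFinset.mp (hS ht) i)).le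
  have hinj : Set.InjOn (fun (t : ι → ℕ) i => t i / m) (S : Set (ι → ℕ)) := by
    intro t ht t' ht' hdiv
    refine hsep t ht t' ht' fun i => ?_
    have hi : t i / m = t' i / m := congrFun hdiv i
    have h := Nat.div_add_mod (t i) m
    have h' := Nat.div_add_mod (t' i) m
    rw [hi] at h
    rw [abs_lt]
    have := Nat.mod_lt (t i) hm
    have := Nat.mod_lt (t' i) hm
    lia
  simpa using card_le_card_of_injOn _ hmaps hinj

theorem natCast_div_add_one_pow_le {n C T m c : ℕ} (hm : 0 < m) (hc : 0 < c)
    (hcm : c ≤ C * m ^ n) :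
    (((T / m + 1) ^ n : ℕ) : ℝ) ≤ 2 ^ n * C * T ^ n / c + 1 := by
  obtain hT | hT := lt_or_ge T m
  · rw [Nat.div_eq_of_lt hT, zero_add, one_pow, Nat.cast_one, le_add_iff_nonneg_left]
    positivity
  have hstep : ((T / m + 1 : ℕ) : ℝ) ≤ 2 * (T / m) := by
    have hone : (1 : ℝ) ≤ T / m := (one_le_div₀ (by positivity)).mpr (mod_cast hT)
    have := Nat.cast_div_le (α := ℝ) (m := T) (n := m)
    push_cast
    linarith
  calc (((T / m + 1) ^ n : ℕ) : ℝ) ≤ (2 * (T / m)) ^ n := by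
        rw [Nat.cast_pow]
        gcongr
    _ = 2 ^ n * T ^ n * (1 / m ^ n) := by rw [mul_pow, div_pow]; ring
    _ ≤ 2 ^ n * T ^ n * (C / c) := by
        gcongr _ * ?_
        rw [div_le_div_iff₀ (by positivity) (by positivity), one_mul]
        exact_mod_cast hcm
    _ ≤ 2 ^ n * C * T ^ n / c + 1 := by
        rw [show 2 ^ n * T ^ n * (C / c : ℝ) = 2 ^ n * C * T ^ n / c by ring]
        exact le_add_of_nonneg_right zero_le_one

open Finset in
theorem card_le_of_forall_le_mul_pow {ι : Type*} [Fintype ι] [DecidableEq ι] [Nonempty ι]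
    {C c T : ℕ} (hC : 0 < C) (hc : 0 < c) {S : Finset (ι → ℕ)}
    (hS : S ⊆ Fintype.piFinset fun _ => range T)
    (hsep : ∀ t ∈ S, ∀ t' ∈ S, t ≠ t' → ∀ y : ℕ, (∀ i, |(t i : ℤ) - t' i| ≤ y) →
      c ≤ C * y ^ Fintype.card ι) :
    (#S : ℝ) ≤ 2 ^ Fintype.card ι * C * T ^ Fintype.card ι / c + 1 := by
  have hex : ∃ m, c ≤ C * m ^ Fintype.card ι :=
    ⟨c, (Nat.le_self_pow Fintype.card_ne_zero c).trans (Nat.le_mul_of_pos_left _ hC)⟩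
  have hm : 0 < Nat.find hex := by
    rw [Nat.find_pos, zero_pow Fintype.card_ne_zero]
    lia
  refine le_trans ?_ (natCast_div_add_one_pow_le hm hc (Nat.find_spec hex))
  refine Nat.cast_le.mpr (card_le_of_separated hm hS fun t ht t' ht' hclose => ?_)
  by_contra hne
  refine Nat.find_min hex (Nat.sub_one_lt hm.ne') (hsep t ht t' ht' hne _ fun i => ?_)
  have := hclose i
  lia

theorem sum_Ioc_mul_div_sq_add_one_lt {E C X : ℝ} {Z Q : ℕ} (hE : 0 ≤ E) (hC : 0 ≤ C)
    (hX : 0 < X) (hZ : 2 * E * C < Z) (hQ : 2 * E * Q ≤ X) :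
    ∑ p ∈ Finset.Ioc Z Q, E * (C * X / (p : ℝ) ^ 2 + 1) < X := by
  have hZ0 : (0 : ℝ) < Z := lt_of_le_of_lt (by positivity) hZ
  obtain hQZ | hZQ := lt_or_ge Q Z
  · simpa [Finset.Ioc_eq_empty_of_le hQZ.le] using hX
  have hsq : ∑ p ∈ Finset.Ioc Z Q, ((p : ℝ) ^ 2)⁻¹ ≤ (Z : ℝ)⁻¹ :=
    (sum_Ioc_inv_sq_le_sub (Nat.cast_pos.mp hZ0).ne' hZQ).trans (sub_le_self _ (by positivity))
  have hmain : E * C * X * (Z : ℝ)⁻¹ < X / 2 := by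
    rw [← div_eq_mul_inv, div_lt_div_iff₀ hZ0 two_pos]
    nlinarith
  have hcount : ((Q - Z : ℕ) : ℝ) ≤ Q := Nat.cast_le.mpr (Nat.sub_le Q Z)
  calc ∑ p ∈ Finset.Ioc Z Q, E * (C * X / (p : ℝ) ^ 2 + 1)
      = E * C * X * ∑ p ∈ Finset.Ioc Z Q, ((p : ℝ) ^ 2)⁻¹ + E * (Q - Z : ℕ) := by
        simp only [mul_add, mul_one, Finset.sum_add_distrib, Finset.sum_const, Nat.card_Ioc,
          nsmul_eq_mul, Finset.mul_sum]
        congr 1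
        · exact Finset.sum_congr rfl fun p _ => by ring
        · ring
    _ ≤ E * C * X * (Z : ℝ)⁻¹ + E * Q := by gcongr
    _ < X := by linarith

theorem exists_finset_prime_mem_iff (R : Type*) [CommRing R] [Module.Free ℤ R]
    [Module.Finite ℤ R] {p : ℕ} (hp : p.Prime) :
    ∃ s : Finset (Ideal R), s.card ≤ Module.finrank ℤ R ∧
      ∀ P : Ideal R, P ∈ s ↔ P.IsPrime ∧ (p : R) ∈ P := by
  have : Fact p.Prime := ⟨hp⟩
  have hmax := Int.ideal_span_isMaximal_of_prime p
  have := hmax.isPrime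
  let := (Algebra.QuasiFinite.finite_primesOver (S := R) (Ideal.span {(p : ℤ)})).fintype
  refine ⟨((Ideal.span {(p : ℤ)}).primesOver R).toFinset, ?_, fun P => ?_⟩
  · rw [Set.toFinset_card, Fintype.card_eq_sum_ones,
      ← Ideal.sum_ramification_inertia_eq_finrank (Ideal.span {(p : ℤ)}) R]
    refine Finset.sum_le_sum fun P _ => ?_
    have := P.2.1
    exact Nat.mul_pos (P.1.ramificationIdx_pos ℤ) (P.1.inertiaDeg_pos ℤ)
  · rw [Set.mem_toFinset]
    refine and_congr_right fun hP => ⟨fun hover => ?_, fun hpP => ⟨?_⟩⟩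
    · simpa using (hover.over ▸ Ideal.mem_span_singleton_self (p : ℤ) : (p : ℤ) ∈ P.under ℤ)
    · refine hmax.eq_of_le (hP.comap _).ne_top ((Ideal.span_singleton_le_iff_mem _).mpr ?_)
      simpa using hpP

theorem absNorm_under_eq_of_natCast_mem {R : Type*} [Ring R] {P : Ideal R} (hP : P ≠ ⊤) {p : ℕ}
    (hp : p.Prime) (hpP : (p : R) ∈ P) : Ideal.absNorm (P.under ℤ) = p := by
  refine ((Nat.dvd_prime hp).mp ?_).resolve_left fun h => hP ?_
  · exact_mod_cast Int.cast_mem_ideal_iff.mp (by simpa using hpP : ((p : ℤ) : R) ∈ P)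
  · rw [Ideal.absNorm_eq_one_iff, Ideal.eq_top_iff_one, Ideal.mem_comap, map_one] at h
    exact (Ideal.eq_top_iff_one P).mpr h

theorem natCast_mem_iff_dvd {R : Type*} [Ring R] {P : Ideal R} (hP : P ≠ ⊤) {p : ℕ}
    (hp : p.Prime) (hpP : (p : R) ∈ P) {m : ℕ} : (m : R) ∈ P ↔ p ∣ m := by
  rw [← Int.cast_natCast, Int.cast_mem_ideal_iff, absNorm_under_eq_of_natCast_mem hP hp hpP,
    Int.natCast_dvd_natCast]

theorem exists_prime_natCast_mem {R : Type*} [CommRing R] [IsDomain R] [Algebra.IsIntegral ℤ R]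
    {P : Ideal R} [P.IsPrime] (hP : P ≠ ⊥) : ∃ p : ℕ, p.Prime ∧ (p : R) ∈ P :=
  have : NeZero P := ⟨hP⟩
  ⟨_, Nat.absNorm_under_prime P, Int.absNorm_under_mem P⟩

theorem exists_isPrime_natCast_mem (R : Type*) [CommRing R] [Algebra.IsIntegral ℤ R]
    [FaithfulSMul ℤ R] {p : ℕ} (hp : p.Prime) : ∃ P : Ideal R, P.IsPrime ∧ (p : R) ∈ P := by
  have : Fact p.Prime := ⟨hp⟩
  have := Int.ideal_span_isMaximal_of_prime p
  obtain ⟨P, hP, hover⟩ := Ideal.exists_maximal_ideal_liesOver_of_isIntegral (S := R)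
    (Ideal.span {(p : ℤ)})
  refine ⟨P, hP.isPrime, ?_⟩
  simpa using (hover.over ▸ Ideal.mem_span_singleton_self (p : ℤ) : (p : ℤ) ∈ P.under ℤ)

section LatticeCount

variable {R ι : Type*} [CommRing R] [Fintype ι]

/-- The lattice point with natural number coordinates `t` in the `ℤ`-basis `b`; the sieve runs over
the elements `a + N * latticePoint b t` with `t` in a box. -/
noncomputable def latticePoint (b : Module.Basis ι ℤ R) (t : ι → ℕ) : R := ∑ i, (t i : ℤ) • b i

@[simp] theorem repr_latticePoint (b : Module.Basis ι ℤ R) (t : ι → ℕ) (i : ι) :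
    b.repr (latticePoint b t) i = t i :=
  congrFun (b.repr_sum_self fun i => (t i : ℤ)) i

theorem latticePoint_injective (b : Module.Basis ι ℤ R) :
    Function.Injective (latticePoint b) := fun t t' h => by
  funext i
  exact_mod_cast (repr_latticePoint b t i).symm.trans (h ▸ repr_latticePoint b t' i)

variable [DecidableEq ι] (b : Module.Basis ι ℤ R)

section Norm

variable [IsDomain R]

/-- A constant `C` such that elements with coordinates at most `y` in the `ℤ`-basis `b` have norm
at most `C * y ^ card ι`, as a natural number. -/
noncomputable def natNormBound : ℕ := (ClassGroup.normBound AbsoluteValue.abs b).toNat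

theorem natCast_natNormBound :
    (natNormBound b : ℤ) = ClassGroup.normBound AbsoluteValue.abs b :=
  Int.toNat_of_nonneg (ClassGroup.normBound_pos _ b).le

theorem natNormBound_pos : 0 < natNormBound b := by
  exact_mod_cast natCast_natNormBound b ▸ ClassGroup.normBound_pos AbsoluteValue.abs b

theorem natAbs_norm_le {x : R} {y : ℕ} (h : ∀ i, |b.repr x i| ≤ y) :
    (Algebra.norm ℤ x).natAbs ≤ natNormBound b * y ^ Fintype.card ι := by
  have := ClassGroup.norm_le AbsoluteValue.abs b x h
  rw [← natCast_natNormBound b, AbsoluteValue.abs_apply, Int.abs_eq_natAbs] at this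
  exact_mod_cast this

end Norm

variable [IsDedekindDomain R] [Module.Free ℤ R] [Module.Finite ℤ R]

theorem absNorm_le_natAbs_norm {I : Ideal R} {x : R} (hx : x ≠ 0) (hxI : x ∈ I) :
    Ideal.absNorm I ≤ (Algebra.norm ℤ x).natAbs :=
  Nat.le_of_dvd (Int.natAbs_pos.mpr (Algebra.norm_ne_zero_iff.mpr hx))
    (Int.natCast_dvd.mp (Ideal.absNorm_dvd_norm_of_mem hxI))

open Finset Classical in
theorem card_latticePoint_mem_le [Nonempty ι] {I : Ideal R} (hI : I ≠ ⊥) {a N : R}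
    (hN : ∀ y, N * y ∈ I → y ∈ I) (T : ℕ) :
    (#{t ∈ Fintype.piFinset fun _ => range T | a + N * latticePoint b t ∈ I} : ℝ) ≤
      2 ^ Fintype.card ι * natNormBound b * T ^ Fintype.card ι / Ideal.absNorm I + 1 := by
  have hI' : 0 < Ideal.absNorm I := Nat.pos_of_ne_zero (Ideal.absNorm_eq_zero_iff.not.mpr hI)
  refine card_le_of_forall_le_mul_pow (natNormBound_pos b) hI' (filter_subset _ _)
    fun t ht t' ht' hne y hy => ?_
  have hmem : latticePoint b t - latticePoint b t' ∈ I :=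
    hN _ (by simpa [mul_sub] using I.sub_mem (mem_filter.mp ht).2 (mem_filter.mp ht').2)
  refine (absNorm_le_natAbs_norm (sub_ne_zero.mpr ((latticePoint_injective b).ne hne)) hmem).trans
    (natAbs_norm_le b fun i => ?_)
  simpa using hy i

theorem sq_le_absNorm_pow {P : Ideal R} [P.IsPrime] {p k : ℕ} (hp : p.Prime) (hpP : (p : R) ∈ P)
    (hk : 2 ≤ k) : p ^ 2 ≤ Ideal.absNorm (P ^ k) := by
  have hP : P ≠ ⊥ := by
    rintro rfl
    have : CharZero R := charZero_of_injective_algebraMap (FaithfulSMul.algebraMap_injective ℤ R)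
    exact hp.ne_zero (by simpa using hpP)
  have hpos : 0 < Ideal.absNorm P := Nat.pos_of_ne_zero (Ideal.absNorm_eq_zero_iff.not.mpr hP)
  have hle : p ≤ Ideal.absNorm P := Nat.le_of_dvd hpos <|
    absNorm_under_eq_of_natCast_mem Ideal.IsPrime.ne_top' hp hpP ▸ Int.absNorm_under_dvd_absNorm P
  rw [map_pow]
  exact (Nat.pow_le_pow_left hle 2).trans (Nat.pow_le_pow_right hpos hk)

open Finset Classical in
theorem card_latticePoint_mem_pow_le [Nonempty ι] {p k N : ℕ} (hp : p.Prime) (hk : 2 ≤ k)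
    (hpN : ¬ p ∣ N) (a : R) (T : ℕ) :
    (#{t ∈ Fintype.piFinset fun _ => range T | ∃ P : Ideal R, P.IsPrime ∧ (p : R) ∈ P ∧
        a + N * latticePoint b t ∈ P ^ k} : ℝ) ≤
      Fintype.card ι *
        (2 ^ Fintype.card ι * natNormBound b * T ^ Fintype.card ι / p ^ 2 + 1) := by
  obtain ⟨s, hcard, hs⟩ := exists_finset_prime_mem_iff R hp
  set bad : Ideal R → Finset (ι → ℕ) := fun P =>
    {t ∈ Fintype.piFinset fun _ => range T | a + N * latticePoint b t ∈ P ^ k}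
  set B : ℝ := 2 ^ Fintype.card ι * natNormBound b * T ^ Fintype.card ι / p ^ 2 + 1
  have hbad : ∀ P ∈ s, (#(bad P) : ℝ) ≤ B := fun P hPs => by
    obtain ⟨hP, hpP⟩ := (hs P).mp hPs
    have hNP : (N : R) ∉ P := (natCast_mem_iff_dvd hP.ne_top hp hpP).not.mpr hpN
    have hsq := sq_le_absNorm_pow hp hpP hk
    have hPk : P ^ k ≠ ⊥ := by
      intro h
      rw [h, Ideal.absNorm_bot] at hsq
      exact absurd hsq (Nat.not_le.mpr (pow_pos hp.pos 2))
    refine (card_latticePoint_mem_le b hPk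
      (fun y hy => (Ideal.IsPrime.mul_mem_pow P hy).resolve_left hNP) T).trans ?_
    have := hp.pos
    simp only [B]
    gcongr
    exact_mod_cast hsq
  calc _ ≤ (#(s.biUnion bad) : ℝ) := by
        gcongr
        rintro t ht
        obtain ⟨htT, P, hP, hpP, htP⟩ := mem_filter.mp ht
        exact mem_biUnion.mpr ⟨P, (hs P).mpr ⟨hP, hpP⟩, mem_filter.mpr ⟨htT, htP⟩⟩
    _ ≤ ∑ P ∈ s, (#(bad P) : ℝ) := mod_cast card_biUnion_le
    _ ≤ #s * B := by simpa using sum_le_card_nsmul s _ B hbad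
    _ ≤ Fintype.card ι * B := by
        rw [← Module.finrank_eq_card_basis b]
        gcongr

theorem exists_mul_sqrt_mul_pow_le {n : ℕ} (hn : n ≠ 0) (E C H N : ℕ) :
    ∃ T, 0 < T ∧ E * Nat.sqrt (C * (H + N * T) ^ n) ≤ T ^ n := by
  set T := E ^ 2 * (C * (H + N) ^ n) + 1
  have hTpos : 0 < T := Nat.succ_pos _
  refine ⟨T, hTpos, (Nat.pow_le_pow_iff_left two_ne_zero).mp ?_⟩
  calc (E * Nat.sqrt (C * (H + N * T) ^ n)) ^ 2
      ≤ E ^ 2 * (C * (H * T + N * T) ^ n) := by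
        rw [mul_pow]
        gcongr
        exact (Nat.sqrt_le' _).trans (by gcongr; exact Nat.le_mul_of_pos_right H hTpos)
    _ = E ^ 2 * (C * (H + N) ^ n) * T ^ n := by rw [← add_mul, mul_pow]; ring
    _ ≤ T ^ n * T ^ n := by
        gcongr
        exact (Nat.le_succ _).trans (Nat.le_self_pow hn T)
    _ = (T ^ n) ^ 2 := (sq _).symm

theorem le_sqrt_of_mem_pow {P : Ideal R} [P.IsPrime] {p k H N T : ℕ} (hp : p.Prime)
    (hpP : (p : R) ∈ P) (hk : 2 ≤ k) {a : R} (hH : ∀ i, (b.repr a i).natAbs ≤ H) {t : ι → ℕ}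
    (ht : ∀ i, t i ≤ T) (h0 : a + N * latticePoint b t ≠ 0)
    (hmem : a + N * latticePoint b t ∈ P ^ k) :
    p ≤ Nat.sqrt (natNormBound b * (H + N * T) ^ Fintype.card ι) := by
  refine Nat.le_sqrt'.mpr ((sq_le_absNorm_pow hp hpP hk).trans
    ((absNorm_le_natAbs_norm h0 hmem).trans (natAbs_norm_le b fun i => ?_)))
  have hrepr : b.repr (a + N * latticePoint b t) i = b.repr a i + N * t i := by
    rw [← nsmul_eq_mul, map_add, map_nsmul]
    simp
  rw [hrepr]
  refine (abs_add_le _ _).trans ?_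
  push_cast
  gcongr
  · exact Int.abs_eq_natAbs _ ▸ Int.ofNat_le.mpr (hH i)
  · rw [abs_of_nonneg (by positivity)]
    gcongr
    exact ht i

open Finset Classical in
theorem exists_add_mul_forall_notMem_pow [Nonempty ι] {k N Z : ℕ} (hk : 2 ≤ k)
    (hZ : 2 * Fintype.card ι * (2 ^ Fintype.card ι * natNormBound b) < Z)
    (hN : ∀ p : ℕ, p.Prime → p ≤ Z → p ∣ N) {a : R} (h0 : ∀ w : R, a + N * w ≠ 0)
    (hlocal : ∀ P : Ideal R, P.IsPrime → (N : R) ∈ P → ∀ w, a + N * w ∉ P ^ k) :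
    ∃ w : R, ∀ P : Ideal R, P.IsPrime → P ≠ ⊥ → a + N * w ∉ P ^ k := by
  by_contra! hbad
  obtain ⟨H, hH⟩ := Finite.exists_le fun i => (b.repr a i).natAbs
  obtain ⟨T, hT, hQ⟩ := exists_mul_sqrt_mul_pow_le (Fintype.card_ne_zero (α := ι))
    (2 * Fintype.card ι) (natNormBound b) H N
  set Q := Nat.sqrt (natNormBound b * (H + N * T) ^ Fintype.card ι)
  set sifted : ℕ → Finset (ι → ℕ) := fun p => {t ∈ Fintype.piFinset fun _ => range T |
    ∃ P : Ideal R, P.IsPrime ∧ (p : R) ∈ P ∧ a + N * latticePoint b t ∈ P ^ k}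
  set primes : Finset ℕ := {p ∈ Ioc Z Q | p.Prime ∧ ¬ p ∣ N}
  have hcover : (Fintype.piFinset fun _ : ι => range T) ⊆ primes.biUnion sifted := fun t ht => by
    obtain ⟨P, hP, hP0, hmem⟩ := hbad (latticePoint b t)
    obtain ⟨p, hp, hpP⟩ := exists_prime_natCast_mem hP0
    have hpN : ¬ p ∣ N := fun h =>
      hlocal P hP ((natCast_mem_iff_dvd hP.ne_top hp hpP).mpr h) _ hmem
    have htT : ∀ i, t i ≤ T := fun i => (mem_range.mp (Fintype.mem_piFinset.mp ht i)).le
    have hpZ : Z < p := not_le.mp fun h => hpN (hN p hp h)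
    have hpQ : p ≤ Q := le_sqrt_of_mem_pow b hp hpP hk hH htT (h0 _) hmem
    exact mem_biUnion.mpr ⟨p, mem_filter.mpr ⟨mem_Ioc.mpr ⟨hpZ, hpQ⟩, hp, hpN⟩,
      mem_filter.mpr ⟨ht, P, hP, hpP, hmem⟩⟩
  refine lt_irrefl ((T : ℝ) ^ Fintype.card ι) ?_
  calc (T : ℝ) ^ Fintype.card ι = #(Fintype.piFinset fun _ : ι => range T) := by simp
    _ ≤ ∑ p ∈ primes, (#(sifted p) : ℝ) :=
        mod_cast (card_le_card hcover).trans card_biUnion_le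
    _ ≤ ∑ p ∈ primes, Fintype.card ι *
          (2 ^ Fintype.card ι * natNormBound b * (T : ℝ) ^ Fintype.card ι / p ^ 2 + 1) :=
        sum_le_sum fun p hp =>
          card_latticePoint_mem_pow_le b (mem_filter.mp hp).2.1 hk (mem_filter.mp hp).2.2 a T
    _ ≤ ∑ p ∈ Ioc Z Q, Fintype.card ι *
          (2 ^ Fintype.card ι * natNormBound b * (T : ℝ) ^ Fintype.card ι / p ^ 2 + 1) :=
        sum_le_sum_of_subset_of_nonneg (filter_subset _ _) fun _ _ _ => by positivity
    _ < (T : ℝ) ^ Fintype.card ι :=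
        sum_Ioc_mul_div_sq_add_one_lt (by positivity) (by positivity)
          (pow_pos (Nat.cast_pos.mpr hT) _) (mod_cast hZ) (mod_cast hQ)

end LatticeCount

theorem exists_coprime_forall_prime_le_dvd_mul (N Z : ℕ) :
    ∃ R : ℕ, N.Coprime R ∧ ∀ p : ℕ, p.Prime → p ≤ Z → p ∣ N * R := by
  refine ⟨∏ q ∈ Finset.Icc 1 Z with q.Prime ∧ ¬ q ∣ N, q, ?_, fun p hp hpZ => ?_⟩
  · refine Nat.Coprime.prod_right fun q hq => ?_
    obtain ⟨-, hq, hqN⟩ := Finset.mem_filter.mp hq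
    exact (hq.coprime_iff_not_dvd.mpr hqN).symm
  · by_cases hpN : p ∣ N
    · exact hpN.mul_right _
    · refine Dvd.dvd.mul_left (Finset.dvd_prod_of_mem _ ?_) N
      exact Finset.mem_filter.mpr ⟨Finset.mem_Icc.mpr ⟨hp.one_le, hpZ⟩, hp, hpN⟩

section KFree

variable {K : Type*} [Field K] [NumberField K]

theorem exists_add_mul_mem_kfreeSet {k N : ℕ} (hk : 2 ≤ k) {a : 𝓞 K}
    (hlocal : ∀ P : Ideal (𝓞 K), P.IsPrime → (N : 𝓞 K) ∈ P → ∀ w, a + N * w ∉ P ^ k) :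
    ∃ w, a + N * w ∈ kfreeSet K k := by
  classical
  let b := RingOfIntegers.basis K
  have := b.index_nonempty
  set n := Fintype.card (Module.Free.ChooseBasisIndex ℤ (𝓞 K))
  set Z := 2 * n * (2 ^ n * natNormBound b) + 2
  obtain ⟨R, hcop, hdvd⟩ := exists_coprime_forall_prime_le_dvd_mul N Z
  obtain ⟨u, v, huv⟩ : IsCoprime (N : 𝓞 K) (R : 𝓞 K) := by
    simpa using (Nat.isCoprime_iff_coprime.mpr hcop).map (Int.castRingHom (𝓞 K))
  set a' := a + N * (u * (1 - a)) with ha'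
  have ha'R : a' = 1 + R * (v * (a - 1)) := by linear_combination (1 - a) * huv
  have hlocal' : ∀ P : Ideal (𝓞 K), P.IsPrime → ((N * R : ℕ) : 𝓞 K) ∈ P →
      ∀ w, a' + (N * R : ℕ) * w ∉ P ^ k := by
    intro P hP hNR w hmem
    push_cast at hNR hmem
    obtain hNP | hRP := hP.mem_or_mem hNR
    · refine hlocal P hP hNP (u * (1 - a) + R * w) ?_
      rwa [mul_add, ← add_assoc, ← mul_assoc (N : 𝓞 K) R]
    · refine hP.ne_top ((Ideal.eq_top_iff_one P).mpr ?_)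
      rw [show (1 : 𝓞 K) = a' + N * R * w - R * (v * (a - 1) + N * w) by
        linear_combination -ha'R]
      exact P.sub_mem (Ideal.pow_le_self (by lia) hmem) (P.mul_mem_right _ hRP)
  have h0 : ∀ w, a' + (N * R : ℕ) * w ≠ 0 := fun w h => by
    obtain ⟨P, hP, h2P⟩ := exists_isPrime_natCast_mem (𝓞 K) Nat.prime_two
    refine hlocal' P hP (P.mem_of_dvd ?_ h2P) w (h ▸ Ideal.zero_mem _)
    exact Nat.cast_dvd_cast (hdvd 2 Nat.prime_two (Nat.le_add_left 2 _))
  obtain ⟨w, hw⟩ := exists_add_mul_forall_notMem_pow b hk (by lia) hdvd h0 hlocal'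
  refine ⟨u * (1 - a) + R * w, ?_⟩
  have heq : a + N * (u * (1 - a) + R * w) = a' + (N * R : ℕ) * w := by
    push_cast [ha']
    ring
  exact heq ▸ hw

end KFree

theorem eventually_one_lt_norm_one_sub_natCast_mul {z : ℂ} (hz : z ≠ 0) :
    ∀ᶠ t : ℕ in Filter.atTop, 1 < ‖1 - t * z‖ := by
  have htendsto := (tendsto_natCast_atTop_atTop (R := ℝ)).atTop_mul_const (norm_pos_iff.mpr hz)
  filter_upwards [htendsto.eventually_gt_atTop 2] with t ht
  have h := norm_sub_norm_le ((t : ℂ) * z) 1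
  rw [norm_sub_rev, norm_mul, Complex.norm_natCast, norm_one] at h
  linarith

theorem exists_dvd_natCast {R : Type*} [CommRing R] [IsDedekindDomain R] [Module.Free ℤ R]
    [Module.Finite ℤ R] {x : R} (hx : x ≠ 0) : ∃ c : ℕ, c ≠ 0 ∧ x ∣ (c : R) := by
  refine ⟨Ideal.absNorm (Ideal.span {x}), ?_, Ideal.mem_span_singleton.mp (Ideal.absNorm_mem _)⟩
  rwa [Ne, Ideal.absNorm_eq_zero_iff, Ideal.span_singleton_eq_bot]

theorem pow_notMem_pow_succ {R : Type*} [CommRing R] [IsDedekindDomain R] {q : Ideal R}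
    [q.IsPrime] {x : R} (hx : x ∈ q) (hx2 : x ∉ q ^ 2) (l : ℕ) : x ^ l ∉ q ^ (l + 1) := by
  obtain ⟨J, hJ⟩ := Ideal.dvd_span_singleton.mpr hx
  have hq0 : q ≠ 0 := by
    rintro rfl
    exact hx2 (by simp_all)
  rw [← Ideal.dvd_span_singleton, ← Ideal.span_singleton_pow, hJ, mul_pow, pow_succ,
    mul_dvd_mul_iff_left (pow_ne_zero l hq0)]
  intro hdvd
  have hqJ : q ∣ J := (Ideal.prime_of_isPrime hq0 ‹_›).dvd_of_dvd_pow hdvd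
  exact hx2 (Ideal.dvd_span_singleton.mp (hJ ▸ sq q ▸ mul_dvd_mul_left q hqJ))

theorem exists_intCast_sub_mem_pow {R : Type*} [CommRing R] [IsDedekindDomain R] {q : Ideal R}
    [q.IsPrime] {p : ℕ} (hp : (p : R) ∈ q) (hp2 : (p : R) ∉ q ^ 2)
    (hq : ∀ z : R, ∃ n : ℤ, z - n ∈ q) (l : ℕ) (z : R) : ∃ n : ℤ, z - n ∈ q ^ l := by
  have hq0 : q ≠ ⊥ := by
    rintro rfl
    exact hp2 (by simp_all)
  induction l with
  | zero => exact ⟨0, by simp⟩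
  | succ l ih =>
    obtain ⟨n, hn⟩ := ih
    obtain ⟨d, e, he, hde⟩ :=
      Ideal.exists_mul_add_mem_pow_succ hq0 _ _ (Ideal.pow_mem_pow hp l)
        (pow_notMem_pow_succ hp hp2 l) hn
    obtain ⟨m, hm⟩ := hq d
    refine ⟨n + p ^ l * m, ?_⟩
    have hsplit : z - (n + p ^ l * m : ℤ) = p ^ l * (d - m) + e := by
      push_cast
      linear_combination -hde
    rw [hsplit, pow_succ]
    exact add_mem (Ideal.mul_mem_mul (Ideal.pow_mem_pow hp l) hm) (pow_succ q l ▸ he)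

theorem exists_intCast_sub_mem_of_mem_conductor {R : Type*} [CommRing R] {q : Ideal R}
    [q.IsMaximal] {θ δ : R} {n : ℤ} (hθ : θ - n ∈ q) (hδ : δ ∈ conductor ℤ θ) (hδq : δ ∉ q)
    (z : R) : ∃ m : ℤ, z - m ∈ q := by
  have hadjoin : Algebra.adjoin ℤ {θ} ≤
      (⊥ : Subalgebra ℤ (R ⧸ q)).comap (Ideal.Quotient.mkₐ ℤ q) :=
    Algebra.adjoin_singleton_le
      (Algebra.mem_bot.mpr ⟨n, by simpa using (Ideal.Quotient.eq.mpr hθ).symm⟩)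
  obtain ⟨y, i, hi, hyi⟩ := Ideal.IsMaximal.exists_inv ‹q.IsMaximal› hδq
  obtain ⟨m, hm⟩ := Algebra.mem_bot.mp (hadjoin (hδ (y * z)))
  have hm' : δ * (y * z) - m ∈ q := Ideal.Quotient.eq.mp (by simpa using hm.symm)
  refine ⟨m, ?_⟩
  rw [show z - m = (δ * (y * z) - m) + z * i by linear_combination -z * hyi]
  exact q.add_mem hm' (q.mul_mem_left _ hi)

section DegreeOne

variable {L : Type*} [Field L] [NumberField L]

theorem not_isUnit_of_forall_one_lt_norm {x : 𝓞 L}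
    (hx : ∀ σ : L →ₐ[ℚ] ℂ, 1 < ‖σ x‖) : ¬ IsUnit x := by
  intro hunit
  have hnorm : ∏ σ : L →ₐ[ℚ] ℂ, ‖σ x‖ = 1 := by
    rw [← norm_prod, ← Algebra.norm_eq_prod_embeddings ℚ ℂ (x : L), eq_ratCast,
      Complex.norm_ratCast, ← RingOfIntegers.coe_norm]
    exact_mod_cast isUnit_iff_norm.mp hunit
  have : Nonempty (L →ₐ[ℚ] ℂ) := ⟨IsAlgClosed.lift⟩
  have hlt := Finset.prod_lt_prod_of_nonempty (fun _ _ => one_pos) (fun σ _ => hx σ)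
    (Finset.univ_nonempty (α := L →ₐ[ℚ] ℂ))
  rw [Finset.prod_const_one, hnorm] at hlt
  exact lt_irrefl _ hlt

theorem exists_one_sub_natCast_mul_not_isUnit {y : 𝓞 L} (hy : y ≠ 0) :
    ∃ t : ℕ, ¬ IsUnit (1 - t * y) ∧ 1 - t * y ≠ 0 := by
  have hev : ∀ σ : L →ₐ[ℚ] ℂ, ∀ᶠ t : ℕ in Filter.atTop, 1 < ‖σ ((1 - t * y : 𝓞 L) : L)‖ := by
    intro σ
    have hσ : σ (y : L) ≠ 0 := (map_ne_zero σ).mpr (RingOfIntegers.coe_ne_zero_iff.mpr hy)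
    simpa using eventually_one_lt_norm_one_sub_natCast_mul hσ
  obtain ⟨t, ht⟩ := (Filter.eventually_all.mpr hev).exists
  refine ⟨t, not_isUnit_of_forall_one_lt_norm ht, fun h0 => ?_⟩
  have hlt := ht IsAlgClosed.lift
  rw [h0] at hlt
  norm_num at hlt

theorem exists_isMaximal_sub_intCast_mem (θ : 𝓞 L) {D : 𝓞 L} (hD : D ≠ 0) :
    ∃ q : Ideal (𝓞 L), q.IsMaximal ∧ q ≠ ⊥ ∧ D ∉ q ∧ ∃ n : ℤ, θ - n ∈ q := by
  wlog hθ : θ ≠ 0 generalizing θ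
  · obtain ⟨q, hq, hq0, hDq, n, hn⟩ := this (θ + 1) (by simp [not_not.mp hθ])
    exact ⟨q, hq, hq0, hDq, n - 1, by simpa [sub_sub_eq_add_sub] using hn⟩
  obtain ⟨c, hc, e, hce⟩ := exists_dvd_natCast (mul_ne_zero hθ hD)
  have he : e ≠ 0 := by
    rintro rfl
    simp [hc] at hce
  obtain ⟨t, hunit, ht0⟩ := exists_one_sub_natCast_mul_not_isUnit (mul_ne_zero hD he)
  obtain ⟨q, hq, htq⟩ := exists_max_ideal_of_mem_nonunits hunit
  refine ⟨q, hq, fun h => ht0 (by simpa [h] using htq), fun hDq => ?_, t * c, ?_⟩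
  · refine hq.ne_top ((Ideal.eq_top_iff_one q).mpr ?_)
    rw [show (1 : 𝓞 L) = (1 - t * (D * e)) + t * e * D by ring]
    exact q.add_mem htq (q.mul_mem_left _ hDq)
  · have hfactor : θ - (t * c : ℤ) = θ * (1 - t * (D * e)) := by
      push_cast
      linear_combination (-t : 𝓞 L) * hce
    exact hfactor ▸ q.mul_mem_left _ htq

variable (L) in
theorem exists_ringOfIntegers_adjoin_eq_top :
    ∃ θ : 𝓞 L, Algebra.adjoin ℚ {(θ : L)} = ⊤ := by
  obtain ⟨α, hα⟩ := Field.exists_primitive_element ℚ L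
  have halg : IsAlgebraic ℤ α :=
    (IsFractionRing.isAlgebraic_iff ℤ ℚ L).mpr (Algebra.IsAlgebraic.isAlgebraic α)
  obtain ⟨y, hy, hint⟩ := halg.exists_integral_multiple
  refine ⟨⟨y • α, hint⟩, ?_⟩
  rw [← IntermediateField.adjoin_simple_toSubalgebra_of_isAlgebraic (.of_finite ℚ _),
    ← IntermediateField.top_toSubalgebra, ← hα]
  refine congrArg _ (le_antisymm (hα ▸ le_top) (IntermediateField.adjoin_simple_le_iff.mpr ?_))
  have hαy : (y : ℚ)⁻¹ • (y • α) = α := by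
    rw [← Int.cast_smul_eq_zsmul ℚ, inv_smul_smul₀ (Int.cast_ne_zero.mpr hy)]
  have hmem : (y : ℚ)⁻¹ • (y • α) ∈ IntermediateField.adjoin ℚ {y • α} :=
    IntermediateField.smul_mem _ (IntermediateField.mem_adjoin_simple_self ℚ _)
  rwa [hαy] at hmem

open Polynomial in
theorem aeval_derivative_minpoly_ne_zero (θ : 𝓞 L) : aeval θ (derivative (minpoly ℤ θ)) ≠ 0 := by
  have hsep : aeval (θ : L) (derivative (minpoly ℚ (θ : L))) ≠ 0 :=
    (Algebra.IsSeparable.isSeparable _ _).aeval_derivative_ne_zero (minpoly.aeval _ _)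
  rw [minpoly.isIntegrallyClosed_eq_field_fractions ℚ L θ.isIntegral, derivative_map,
    aeval_map_algebraMap, aeval_algebraMap_apply] at hsep
  exact ne_zero_of_map hsep

variable (L) in
theorem exists_ne_zero_mem_conductor_mem_differentIdeal :
    ∃ θ δ : 𝓞 L, δ ≠ 0 ∧ δ ∈ conductor ℤ θ ∧ δ ∈ differentIdeal ℤ (𝓞 L) := by
  obtain ⟨θ, hθ⟩ := exists_ringOfIntegers_adjoin_eq_top L
  have hle := (conductor_mul_differentIdeal ℤ ℚ L θ hθ).ge
  obtain ⟨hc, hd⟩ := Ideal.mul_le_inf (hle (Ideal.mem_span_singleton_self _))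
  exact ⟨θ, _, aeval_derivative_minpoly_ne_zero θ, hc, hd⟩

theorem natCast_notMem_sq_of_notMem_differentIdeal {q : Ideal (𝓞 L)} {p : ℕ} (hp : p.Prime)
    {δ : 𝓞 L} (hδ : δ ∈ differentIdeal ℤ (𝓞 L)) (hδq : δ ∉ q) : (p : 𝓞 L) ∉ q ^ 2 := by
  intro hpq
  have : Fact p.Prime := ⟨hp⟩
  have := Int.ideal_span_isMaximal_of_prime p
  have hdvd : q ^ 2 ∣ (Ideal.span {(p : ℤ)}).map (algebraMap ℤ (𝓞 L)) := by
    simpa [Ideal.map_span, Ideal.dvd_span_singleton] using hpq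
  have h := pow_sub_one_dvd_differentIdeal ℤ q 2 (by simpa using hp.ne_zero) hdvd
  exact hδq (Ideal.le_of_dvd (by simpa using h) hδ)

theorem exists_isMaximal_forall_exists_intCast_sub_mem_pow {D : 𝓞 L} (hD : D ≠ 0) :
    ∃ q : Ideal (𝓞 L), q.IsMaximal ∧ q ≠ ⊥ ∧ D ∉ q ∧
      ∀ (l : ℕ) (z : 𝓞 L), ∃ n : ℤ, z - n ∈ q ^ l := by
  obtain ⟨θ, δ, hδ0, hδc, hδd⟩ := exists_ne_zero_mem_conductor_mem_differentIdeal L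
  obtain ⟨q, hq, hq0, hDδ, n, hn⟩ := exists_isMaximal_sub_intCast_mem θ (mul_ne_zero hD hδ0)
  have hδq : δ ∉ q := fun h => hDδ (q.mul_mem_left D h)
  obtain ⟨p, hp, hpq⟩ := exists_prime_natCast_mem hq0
  exact ⟨q, hq, hq0, fun h => hDδ (q.mul_mem_right δ h), exists_intCast_sub_mem_pow hpq
    (natCast_notMem_sq_of_notMem_differentIdeal hp hδd hδq)
    (exists_intCast_sub_mem_of_mem_conductor hn hδc hδq)⟩

end DegreeOne

open scoped Pointwise in
theorem exists_le_of_forall_exists_mem {G ι : Type*} [AddCommGroup G] {p m : ℕ} (hp : p.Prime)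
    {Λ : AddSubgroup G} {s : Finset ι} {H : ι → AddSubgroup G} (hs : s.card < p)
    (hcover : ∀ x ∈ Λ, ∃ i ∈ s, x ∈ H i) (hpow : ∀ i ∈ s, ∀ x ∈ Λ, p ^ m • x ∈ H i) :
    ∃ i ∈ s, Λ ≤ H i := by
  have hunion : ⋃ i ∈ s, (0 : Λ) +ᵥ ((H i).addSubgroupOf Λ : Set Λ) = Set.univ := by
    refine Set.eq_univ_of_forall fun x => ?_
    simpa [AddSubgroup.mem_addSubgroupOf] using hcover x x.2
  obtain ⟨i, hi, hfin, hle⟩ := AddSubgroup.exists_index_le_card_of_leftCoset_cover hunion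
  refine ⟨i, hi, fun x hx => ?_⟩
  set d := ((H i).addSubgroupOf Λ).index
  have hdx : d • x ∈ H i := ((H i).addSubgroupOf Λ).nsmul_index_mem ⟨x, hx⟩
  have hcop : (p ^ m).Coprime d :=
    (Nat.coprime_of_lt_prime hfin.index_ne_zero (hle.trans_lt hs) hp).pow_left m
  obtain ⟨u, v, huv⟩ := Nat.isCoprime_iff_coprime.mpr hcop
  have hx : x = u • p ^ m • x + v • d • x := by
    rw [← natCast_zsmul x, ← natCast_zsmul x, smul_smul, smul_smul, ← add_smul, huv, one_smul]
  rw [hx]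
  exact add_mem (zsmul_mem (hpow i hi x ‹_›) u) (zsmul_mem hdx v)

theorem exists_intCast_mul_sub_mem {R : Type*} [CommRing R] {I : Ideal R}
    (hI : ∀ z : R, ∃ n : ℤ, z - n ∈ I) {u : R} (hu : IsUnit (Ideal.Quotient.mk I u)) (z : R) :
    ∃ n : ℤ, z - n * u ∈ I := by
  obtain ⟨c, hc⟩ := hu.exists_left_inv
  obtain ⟨c, rfl⟩ := Ideal.Quotient.mk_surjective c
  obtain ⟨n, hn⟩ := hI (z * c)
  have hcu : c * u - 1 ∈ I := Ideal.Quotient.eq.mp (by simpa using hc)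
  refine ⟨n, ?_⟩
  rw [show z - n * u = (z * c - n) * u - z * (c * u - 1) by ring]
  exact I.sub_mem (I.mul_mem_right _ hn) (I.mul_mem_left _ hcu)

theorem map_mul_mul_sub_map_mul_map_mem {R S : Type*} [CommRing R] [CommRing S] {P : Ideal R}
    {q : Ideal S} (hPq : ∀ m : ℤ, (m : R) ∈ P → (m : S) ∈ q) {f : R → S} {u : S}
    (hf : ∀ w, ∃ n : ℤ, f w - n * u ∈ q ∧ w - n ∈ P) (x y : R) :
    f (x * y) * u - f x * f y ∈ q := by
  obtain ⟨n, hn, hn'⟩ := hf x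
  obtain ⟨m, hm, hm'⟩ := hf y
  obtain ⟨r, hr, hr'⟩ := hf (x * y)
  have hrP : ((r - n * m : ℤ) : R) ∈ P := by
    have hsplit : ((r - n * m : ℤ) : R) = y * (x - n) + n * (y - m) - (x * y - r) := by
      push_cast
      ring
    rw [hsplit]
    exact P.sub_mem (P.add_mem (P.mul_mem_left _ hn') (P.mul_mem_left _ hm')) hr'
  have hsplit : f (x * y) * u - f x * f y = u * (f (x * y) - r * u) + u ^ 2 * (r - n * m : ℤ)
      - f y * (f x - n * u) - n * u * (f y - m * u) := by
    push_cast
    ring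
  rw [hsplit]
  exact q.sub_mem (q.sub_mem (q.add_mem (q.mul_mem_left _ hr) (q.mul_mem_left _ (hPq _ hrP)))
    (q.mul_mem_left _ hn)) (q.mul_mem_left _ hm)

theorem exists_ringHom_eq_mul {R F : Type*} [CommRing R] [Field F] {f : R →+ F}
    (hf1 : f 1 ≠ 0) (hf : ∀ x y, f (x * y) * f 1 = f x * f y) :
    ∃ φ : R →+* F, ∀ x, f x = f 1 * φ x := by
  refine ⟨{ toFun := fun x => f x / f 1
            map_one' := div_self hf1
            map_zero' := by simp
            map_add' := fun x y => by rw [map_add, add_div]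
            map_mul' := fun x y => ?_ }, fun x => (mul_div_cancel₀ _ hf1).symm⟩
  rw [div_mul_div_comm, ← hf, mul_div_mul_right _ _ hf1]

theorem ringHom_injective_of_charZero {R S : Type*} [CommRing R] [IsDedekindDomain R]
    [Module.Free ℤ R] [Module.Finite ℤ R] [Ring S] [CharZero S] (φ : R →+* S) :
    Function.Injective φ := by
  refine (injective_iff_map_eq_zero φ).mpr fun x hx => by_contra fun hx0 => ?_
  obtain ⟨c, hc, y, hy⟩ := exists_dvd_natCast hx0
  have hφc : (c : S) = 0 := by rw [← map_natCast φ, hy, map_mul, hx, zero_mul]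
  exact hc (Nat.cast_eq_zero.mp hφc)

section MapKFree

variable {K L : Type*} [Field K] [NumberField K] [Field L] [NumberField L]

theorem one_mem_kfreeSet {k : ℕ} (hk : k ≠ 0) : (1 : 𝓞 K) ∈ kfreeSet K k :=
  fun _ hP _ h => hP.ne_top ((Ideal.eq_top_iff_one _).mpr (Ideal.pow_le_self hk h))

theorem ne_zero_of_mem_kfreeSet {k : ℕ} {x : 𝓞 K} (hx : x ∈ kfreeSet K k) : x ≠ 0 := by
  rintro rfl
  obtain ⟨q, hq, hq0, -⟩ := exists_isMaximal_sub_intCast_mem (0 : 𝓞 K) one_ne_zero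
  exact hx q hq.isPrime hq0 (zero_mem _)

theorem exists_isPrime_forall_mem_pow {k M p : ℕ} (hk : 2 ≤ k) (hkM : k ≤ M) (hp : p.Prime)
    (hpK : Module.finrank ℤ (𝓞 K) < p) {Λ : AddSubgroup (𝓞 K)}
    (hpΛ : ∀ w, (p : 𝓞 K) ^ M * w ∈ Λ) (hfree : ∀ x ∈ Λ, x ∉ kfreeSet K k) :
    ∃ P : Ideal (𝓞 K), P.IsPrime ∧ (p : 𝓞 K) ∈ P ∧ ∀ x ∈ Λ, x ∈ P ^ k := by
  obtain ⟨s, hs, hsP⟩ := exists_finset_prime_mem_iff (𝓞 K) hp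
  have hpow : ∀ P : Ideal (𝓞 K), (p : 𝓞 K) ∈ P → ∀ w, (p : 𝓞 K) ^ M * w ∈ P ^ k :=
    fun P hpP w => Ideal.mul_mem_right _ _ (Ideal.pow_le_pow_right hkM (Ideal.pow_mem_pow hpP M))
  have hcover : ∀ x ∈ Λ, ∃ P ∈ s, x ∈ (P ^ k).toAddSubgroup := by
    intro x hx
    by_contra! hnot
    obtain ⟨w, hw⟩ := exists_add_mul_mem_kfreeSet (N := p ^ M) (a := x) hk fun P hP hNP w hmem => by
      push_cast at hNP hmem
      have hpP := hP.mem_of_pow_mem _ hNP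
      exact hnot P ((hsP P).mpr ⟨hP, hpP⟩) ((Submodule.add_mem_iff_left _ (hpow P hpP w)).mp hmem)
    exact hfree _ (add_mem hx (by simpa using hpΛ w)) hw
  obtain ⟨P, hPs, hle⟩ := exists_le_of_forall_exists_mem hp (hs.trans_lt hpK) hcover
    (m := M) fun P hPs x _ => by simpa using hpow P ((hsP P).mp hPs).2 x
  exact ⟨P, ((hsP P).mp hPs).1, ((hsP P).mp hPs).2, hle⟩

variable {k l : ℕ} {A : 𝓞 K →ₗ[ℤ] 𝓞 L}

theorem map_mul_sub_mem_of_forall_exists_intCast (hk : 2 ≤ k) (hl : l ≠ 0)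
    (hA : ∀ x ∈ kfreeSet K k, A x ∈ kfreeSet L l) {q : Ideal (𝓞 L)} [q.IsMaximal] (hq0 : q ≠ ⊥)
    (hq : ∀ z : 𝓞 L, ∃ n : ℤ, z - n ∈ q ^ l) {p : ℕ} (hp : p.Prime) (hpq : (p : 𝓞 L) ∈ q)
    (hpK : Module.finrank ℤ (𝓞 K) < p) (hA1 : A 1 ∉ q) (x y : 𝓞 K) :
    A (x * y) * A 1 - A x * A y ∈ q := by
  have hzsmul : ∀ (n : ℤ) (w : 𝓞 K), A (n * w) = n * A w := fun n w => by
    rw [← zsmul_eq_mul, map_zsmul, zsmul_eq_mul]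
  have hpΛ : ∀ w, A ((p : 𝓞 K) ^ (k + l) * w) ∈ q ^ l := fun w => by
    have hmap := hzsmul (p ^ (k + l)) w
    push_cast at hmap
    rw [hmap]
    exact Ideal.mul_mem_right _ _
      (Ideal.pow_le_pow_right (Nat.le_add_left l k) (Ideal.pow_mem_pow hpq _))
  obtain ⟨P, hP, hpP, hΛ⟩ := exists_isPrime_forall_mem_pow hk (Nat.le_add_right k l) hp hpK
    (Λ := (q ^ l).toAddSubgroup.comap A.toAddMonoidHom) hpΛ
    fun w hw hfree => hA w hfree q inferInstance hq0 hw
  refine map_mul_mul_sub_map_mul_map_mem (P := P) (fun m hm => ?_) (fun w => ?_) x y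
  · rw [Int.cast_mem_ideal_iff, absNorm_under_eq_of_natCast_mem hP.ne_top hp hpP] at hm
    rwa [Int.cast_mem_ideal_iff, absNorm_under_eq_of_natCast_mem Ideal.IsPrime.ne_top' hp hpq]
  · obtain ⟨n, hn⟩ := exists_intCast_mul_sub_mem hq
      ((Ideal.Quotient.isUnit_mk_pow_iff_notMem q hl).mpr hA1) (A w)
    refine ⟨n, Ideal.pow_le_self hl hn, Ideal.pow_le_self (by lia) (hΛ (w - n) ?_)⟩
    have hmap : A (w - n) = A w - n * A 1 := by rw [map_sub, ← mul_one (n : 𝓞 K), hzsmul]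
    change A (w - n) ∈ q ^ l
    rwa [hmap]

theorem map_mul_mul_map_one (hk : 2 ≤ k) (hl : l ≠ 0)
    (hA : ∀ x ∈ kfreeSet K k, A x ∈ kfreeSet L l) (x y : 𝓞 K) :
    A (x * y) * A 1 = A x * A y := by
  by_contra hne
  have hA1 : A 1 ≠ 0 := ne_zero_of_mem_kfreeSet (hA 1 (one_mem_kfreeSet (by lia)))
  set n := Module.finrank ℤ (𝓞 K)
  have hfac : (n.factorial : 𝓞 L) ≠ 0 := Nat.cast_ne_zero.mpr n.factorial_ne_zero
  obtain ⟨q, hq, hq0, hDq, hint⟩ := exists_isMaximal_forall_exists_intCast_sub_mem_pow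
    (mul_ne_zero (mul_ne_zero (sub_ne_zero.mpr hne) hA1) hfac)
  obtain ⟨p, hp, hpq⟩ := exists_prime_natCast_mem hq0
  have hpn : n < p := not_le.mp fun hle => hDq <| q.mul_mem_left _ <|
    q.mem_of_dvd (Nat.cast_dvd_cast (hp.dvd_factorial.mpr hle)) hpq
  have hA1q : A 1 ∉ q := fun h => hDq (q.mul_mem_right _ (q.mul_mem_left _ h))
  exact hDq <| q.mul_mem_right _ <| q.mul_mem_right _ <|
    map_mul_sub_mem_of_forall_exists_intCast hk hl hA hq0 (hint l) hp hpq hpn hA1q x y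

end MapKFree

/-- A ℤ-linear map `A : 𝓞 K → 𝓞 L` mapping `k`-free integers (`k ≥ 2`) to `l`-free
integers (`l ≥ 1`) is of the form `x ↦ ε·τ(x)` for a field embedding `τ : K → L` and
some `ε ∈ 𝓞 L`. -/
theorem linear_map_global_kfree {K L : Type*} [Field K] [NumberField K]
    [Field L] [NumberField L] (k l : ℕ) (hk : 2 ≤ k) (hl : 1 ≤ l)
    (A : 𝓞 K →ₗ[ℤ] 𝓞 L)
    (hA : ⇑A '' kfreeSet K k ⊆ kfreeSet L l) :
    ∃ (τ : K →+* L) (ε : 𝓞 L),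
      ∀ x : 𝓞 K, (A x : L) = (ε : L) * τ (x : K) := by
  have hA' : ∀ x ∈ kfreeSet K k, A x ∈ kfreeSet L l := fun x hx => hA ⟨x, hx, rfl⟩
  have hA1 : A 1 ≠ 0 := ne_zero_of_mem_kfreeSet (hA' 1 (one_mem_kfreeSet (by lia)))
  have hmul := map_mul_mul_map_one hk (Nat.one_le_iff_ne_zero.mp hl) hA'
  let f : 𝓞 K →+ L := (algebraMap (𝓞 L) L).toAddMonoidHom.comp A.toAddMonoidHom
  obtain ⟨φ, hφ⟩ : ∃ φ : 𝓞 K →+* L, ∀ x, f x = f 1 * φ x :=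
    exists_ringHom_eq_mul (RingOfIntegers.coe_ne_zero_iff.mpr hA1) fun x y => by
      simpa [f] using congrArg (algebraMap (𝓞 L) L) (hmul x y)
  refine ⟨IsFractionRing.lift (ringHom_injective_of_charZero φ), A 1, fun x => ?_⟩
  rw [IsFractionRing.lift_algebraMap]
  exact hφ x
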